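/- arXiv:2312.07714 — 3 statements merged into one kernel-verified Lean document; each statement's English description precedes it below -/
import Mathlib

section
/- Let Y be a real vector space and ≺ a compatible partial preference on Y with positive cone P_≺. Let 𝓔 be a subfamily of the family O(P_≺) of open components of P_≺ that is linearly ordered by ⊴*. Then for every E ∈ 𝓔 which is not the least element of 𝓔, the set F̂_𝓔(E) := ⋃{Ẽ ∈ 𝓔 | Ẽ ⊲* E} is a convex cone and Lin(F̂_𝓔(E)) ∩ E = ∅, where Lin(F̂_𝓔(E)) := F̂_𝓔(E) − F̂_𝓔(E). -/
open Pointwise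

variable {Y : Type*} [AddCommGroup Y] [Module ℝ Y]

/-- The positive cone of a binary relation: `{y | 0 ≺ y}`. -/
def posCone (r : Y → Y → Prop) : Set Y := {y | r 0 y}

/-- A compatible partial preference: a binary relation compatible with the algebraic
operations which is asymmetric and transitive. -/
structure IsCompatiblePartialPreference (r : Y → Y → Prop) : Prop where
  smul_compat : ∀ ⦃y₁ y₂ : Y⦄ ⦃l : ℝ⦄, 0 < l → r y₁ y₂ → r (l • y₁) (l • y₂)
  add_compat : ∀ ⦃y₁ y₂ : Y⦄ (y : Y), r y₁ y₂ → r (y₁ + y) (y₂ + y)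
  asymm : ∀ ⦃y₁ y₂ : Y⦄, r y₁ y₂ → ¬ r y₂ y₁
  trans : ∀ ⦃y₁ y₂ y₃ : Y⦄, r y₁ y₂ → r y₂ y₃ → r y₁ y₃

/-- A compatible weak preference: a compatible partial preference whose indifference
relation (`y ≍ z` iff neither `y ≺ z` nor `z ≺ y`) is transitive. -/
structure IsCompatibleWeakPreference (r : Y → Y → Prop)
    extends IsCompatiblePartialPreference r : Prop where
  indiff_trans : ∀ ⦃y z u : Y⦄, ¬ r y z → ¬ r z y → ¬ r z u → ¬ r u z → ¬ r y u ∧ ¬ r u y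

/-- The majorization relation on the positive cone: `y ⊴ z` iff `μ • y ≺ z` for some `μ > 0`. -/
def maj (r : Y → Y → Prop) (y z : Y) : Prop := ∃ μ : ℝ, 0 < μ ∧ r (μ • y) z

/-- The equivalence `y ≖ z` : `y ⊴ z` and `z ⊴ y`. -/
def majEquiv (r : Y → Y → Prop) (y z : Y) : Prop := maj r y z ∧ maj r z y

/-- The `≖`-equivalence class of `y` inside the positive cone. -/
def componentOf (r : Y → Y → Prop) (y : Y) : Set Y := {z ∈ posCone r | majEquiv r z y}

/-- Open components of the positive cone: the equivalence classes of `≖`. -/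
def IsOpenComponent (r : Y → Y → Prop) (E : Set Y) : Prop :=
  ∃ y ∈ posCone r, E = componentOf r y

/-- The order `⊴*` on open components: `E₁ ⊴* E₂` iff `y₁ ⊴ y₂` for all `y₁ ∈ E₁`, `y₂ ∈ E₂`. -/
def compLE (r : Y → Y → Prop) (E₁ E₂ : Set Y) : Prop :=
  ∀ y₁ ∈ E₁, ∀ y₂ ∈ E₂, maj r y₁ y₂

/-- The relative algebraic interior (intrinsic core) of a (convex) set. -/
def icr (Q : Set Y) : Set Y :=
  {z ∈ Q | ∀ y ∈ Q, ∃ δ : ℝ, 0 < δ ∧ ∀ t : ℝ, -δ < t → t < δ → z + t • (y - z) ∈ Q}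

/-- The algebraic interior (core) of a set. -/
def algCr (Q : Set Y) : Set Y :=
  {z ∈ Q | ∀ y : Y, ∃ δ : ℝ, 0 < δ ∧ ∀ t : ℝ, -δ < t → t < δ → z + t • (y - z) ∈ Q}

/-- The vector space associated with a convex cone `K`:
`L_K = {h | y + t•h ∈ K for all y ∈ K, t ∈ ℝ}`. -/
def assocSubspace (K : Set Y) : Set Y := {h | ∀ y ∈ K, ∀ t : ℝ, y + t • h ∈ K}

/-- A cone: a set closed under multiplication by positive reals. -/
def IsConeSet (K : Set Y) : Prop := ∀ y ∈ K, ∀ l : ℝ, 0 < l → l • y ∈ K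

/-- A face of a convex set `Q`: a nonempty convex subset `F ⊆ Q` such that whenever a point
`α•u + (1-α)•v` (with `u, v ∈ Q`, `0 < α < 1`) lies in `F`, both `u` and `v` lie in `F`. -/
def IsFaceOf (Q F : Set Y) : Prop :=
  F.Nonempty ∧ Convex ℝ F ∧ F ⊆ Q ∧
    ∀ u ∈ Q, ∀ v ∈ Q, ∀ α : ℝ, 0 < α → α < 1 → α • u + (1 - α) • v ∈ F → u ∈ F ∧ v ∈ F

/-- `F_y`: the members of the family `F` not vanishing at `y`. -/
def Fy (F : Set (Y →ₗ[ℝ] ℝ)) (y : Y) : Set (Y →ₗ[ℝ] ℝ) := {φ ∈ F | φ y ≠ 0}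

/-- `φ` is the least element of `S` with respect to `le`. -/
def IsLeastWrt (le : (Y →ₗ[ℝ] ℝ) → (Y →ₗ[ℝ] ℝ) → Prop) (S : Set (Y →ₗ[ℝ] ℝ))
    (φ : Y →ₗ[ℝ] ℝ) : Prop :=
  φ ∈ S ∧ ∀ ψ ∈ S, le φ ψ

/-- A cortege of linear functions on `Y`: a family `F` of linear functions linearly ordered
by `le` such that every nonempty `F_y` has a least element `φ_y`, and every `φ ∈ F` is `φ_y`
for some `y`. -/
structure IsCortege (F : Set (Y →ₗ[ℝ] ℝ))
    (le : (Y →ₗ[ℝ] ℝ) → (Y →ₗ[ℝ] ℝ) → Prop) : Prop where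
  refl : ∀ φ ∈ F, le φ φ
  antisymm : ∀ φ ∈ F, ∀ ψ ∈ F, le φ ψ → le ψ φ → φ = ψ
  trans : ∀ φ ∈ F, ∀ ψ ∈ F, ∀ χ ∈ F, le φ ψ → le ψ χ → le φ χ
  total : ∀ φ ∈ F, ∀ ψ ∈ F, le φ ψ ∨ le ψ φ
  least_exists : ∀ y : Y, Fy F y = ∅ ∨ ∃ φ, IsLeastWrt le (Fy F y) φ
  surj : ∀ φ ∈ F, ∃ y : Y, IsLeastWrt le (Fy F y) φ

/-- A step-linear function: `u(y) = 0` if `F_y = ∅` and `u(y) = φ_y(y)` otherwise,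
for some cortege `(F, le)`. -/
def IsStepLinear (u : Y → ℝ) : Prop :=
  ∃ (F : Set (Y →ₗ[ℝ] ℝ)) (le : (Y →ₗ[ℝ] ℝ) → (Y →ₗ[ℝ] ℝ) → Prop),
    IsCortege F le ∧
      ∀ y : Y, (Fy F y = ∅ ∧ u y = 0) ∨ ∃ φ, IsLeastWrt le (Fy F y) φ ∧ u y = φ y

theorem aux_trans {r : Y → Y → Prop} (h : IsCompatiblePartialPreference r) {a b c : Y}
    (h1 : maj r a b) (h2 : maj r b c) : maj r a c := by
  obtain ⟨μ, hμ, h1⟩ := h1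
  obtain ⟨ν, hν, h2⟩ := h2
  refine ⟨ν * μ, mul_pos hν hμ, ?_⟩
  have h3 := h.smul_compat hν h1
  rw [smul_smul] at h3
  exact h.trans h3 h2

theorem aux_pos_smul {r : Y → Y → Prop} (h : IsCompatiblePartialPreference r) {a : Y} {l : ℝ}
    (hl : 0 < l) (ha : r 0 a) : r 0 (l • a) := by
  simpa using h.smul_compat hl ha

theorem aux_lt_add {r : Y → Y → Prop} (h : IsCompatiblePartialPreference r) (a : Y) {b : Y}
    (hb : r 0 b) : r a (a + b) := by
  have h1 := h.add_compat a hb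
  rwa [zero_add, add_comm] at h1

theorem aux_refl {r : Y → Y → Prop} (h : IsCompatiblePartialPreference r) {a : Y}
    (ha : r 0 a) : maj r a a := by
  refine ⟨1 / 2, by norm_num, ?_⟩
  have h1 := aux_lt_add h ((1 / 2 : ℝ) • a) (aux_pos_smul h (l := 1 / 2) (by norm_num) ha)
  rw [← add_smul] at h1
  norm_num at h1 ⊢
  exact h1

theorem aux_maj_add {r : Y → Y → Prop} (h : IsCompatiblePartialPreference r) {a b c : Y}
    (h1 : maj r a b) (hc : r 0 c) : maj r a (b + c) := by
  obtain ⟨μ, hμ, h1⟩ := h1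
  exact ⟨μ, hμ, h.trans h1 (aux_lt_add h b hc)⟩

theorem aux_add_maj {r : Y → Y → Prop} (h : IsCompatiblePartialPreference r) {a b c : Y}
    (h1 : maj r a c) (h2 : maj r b c) : maj r (a + b) c := by
  obtain ⟨μ, hμ, h1⟩ := h1
  obtain ⟨ν, hν, h2⟩ := h2
  have h3 := h.add_compat (μ • ν • b) (h.smul_compat hν h1)
  have h4 := h.add_compat (ν • c) (h.smul_compat hμ h2)
  rw [add_comm (μ • ν • b)] at h4
  have h5 := h.smul_compat (inv_pos.2 (add_pos hμ hν)) (h.trans h3 h4)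
  refine ⟨(μ + ν)⁻¹ * (μ * ν), by positivity, ?_⟩
  have e1 : (μ + ν)⁻¹ • (ν • μ • a + μ • ν • b) = ((μ + ν)⁻¹ * (μ * ν)) • (a + b) := by
    module
  have e2 : (μ + ν)⁻¹ • (μ • c + ν • c) = c := by
    rw [← add_smul, smul_smul, inv_mul_cancel₀ (by positivity), one_smul]
  rwa [e1, e2] at h5

theorem aux_smul_equiv {r : Y → Y → Prop} (h : IsCompatiblePartialPreference r) {a : Y} {l : ℝ}
    (hl : 0 < l) (ha : r 0 a) : majEquiv r (l • a) a := by
  obtain ⟨μ, hμ, h1⟩ := aux_refl h ha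
  refine ⟨⟨μ * l⁻¹, by positivity, ?_⟩, ⟨l * μ, by positivity, ?_⟩⟩
  · rw [smul_smul, mul_assoc, inv_mul_cancel₀ hl.ne', mul_one]
    exact h1
  · have := h.smul_compat hl h1
    rwa [smul_smul] at this

theorem aux_mem {r : Y → Y → Prop} (h : IsCompatiblePartialPreference r) {E : Set Y}
    (hE : IsOpenComponent r E) {z w : Y} (hz : z ∈ E) (hw : r 0 w) (hwz : majEquiv r w z) :
    w ∈ E := by
  obtain ⟨y, hy, rfl⟩ := hE
  exact ⟨hw, aux_trans h hwz.1 hz.2.1, aux_trans h hz.2.2 hwz.2⟩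

theorem aux_pos {r : Y → Y → Prop} {E : Set Y}
    (hE : IsOpenComponent r E) {z : Y} (hz : z ∈ E) : r 0 z := by
  obtain ⟨y, hy, rfl⟩ := hE
  exact hz.1

theorem aux_sub {r : Y → Y → Prop} (h : IsCompatiblePartialPreference r) {E F : Set Y}
    (hE : IsOpenComponent r E) (hF : IsOpenComponent r F) {z : Y} (hz : z ∈ E) (hz' : z ∈ F) :
    E ⊆ F := by
  intro w hw
  refine aux_mem h hF hz' (aux_pos hE hw) ?_
  obtain ⟨y, hy, rfl⟩ := hE
  exact ⟨aux_trans h hw.2.1 hz.2.2, aux_trans h hz.2.1 hw.2.2⟩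

theorem aux_add_mem {r : Y → Y → Prop} (h : IsCompatiblePartialPreference r) {E F : Set Y}
    (hE : IsOpenComponent r E) (hF : IsOpenComponent r F) (hle : compLE r E F) {x y : Y}
    (hx : x ∈ E) (hy : y ∈ F) : x + y ∈ F := by
  have px := aux_pos hE hx
  have py := aux_pos hF hy
  refine aux_mem h hF hy (h.trans px (aux_lt_add h x py))
    ⟨aux_add_maj h (hle x hx y hy) (aux_refl h py), ?_⟩
  rw [add_comm]
  exact aux_maj_add h (aux_refl h py) px

/-- For a linearly ordered subfamily `𝓔` of open components and `E ∈ 𝓔` not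
the least element of `𝓔`, the set `F̂_𝓔(E) = ⋃ {Ẽ ∈ 𝓔 | Ẽ ⊲* E}` is a convex cone and
`Lin(F̂_𝓔(E)) ∩ E = ∅`. -/
theorem stmt_4 (r : Y → Y → Prop) (h : IsCompatiblePartialPreference r)
    (𝓔 : Set (Set Y)) (h𝓔 : ∀ E ∈ 𝓔, IsOpenComponent r E)
    (hlin : ∀ E₁ ∈ 𝓔, ∀ E₂ ∈ 𝓔, compLE r E₁ E₂ ∨ compLE r E₂ E₁)
    (E : Set Y) (hE : E ∈ 𝓔) (hnl : ¬ ∀ E' ∈ 𝓔, compLE r E E') :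
    IsConeSet (⋃₀ {E' : Set Y | E' ∈ 𝓔 ∧ compLE r E' E ∧ E' ≠ E}) ∧
    Convex ℝ (⋃₀ {E' : Set Y | E' ∈ 𝓔 ∧ compLE r E' E ∧ E' ≠ E}) ∧
    ((⋃₀ {E' : Set Y | E' ∈ 𝓔 ∧ compLE r E' E ∧ E' ≠ E}) -
      (⋃₀ {E' : Set Y | E' ∈ 𝓔 ∧ compLE r E' E ∧ E' ≠ E})) ∩ E = ∅ := by
  have hcone : IsConeSet (⋃₀ {E' : Set Y | E' ∈ 𝓔 ∧ compLE r E' E ∧ E' ≠ E}) := by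
    rintro y ⟨E', hE', hy⟩ l hl
    have hc := h𝓔 E' hE'.1
    have py := aux_pos hc hy
    exact ⟨E', hE', aux_mem h hc hy (aux_pos_smul h hl py) (aux_smul_equiv h hl py)⟩
  refine ⟨hcone, ?_, ?_⟩
  · intro x hx y hy a b ha hb hab
    rcases ha.eq_or_lt with rfl | ha
    · obtain rfl : b = 1 := by linarith
      simpa using hy
    rcases hb.eq_or_lt with rfl | hb
    · obtain rfl : a = 1 := by linarith
      simpa using hx
    obtain ⟨E₁, h₁, hx⟩ := hcone x hx a ha
    obtain ⟨E₂, h₂, hy⟩ := hcone y hy b hb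
    rcases hlin E₁ h₁.1 E₂ h₂.1 with hle | hle
    · exact ⟨E₂, h₂, aux_add_mem h (h𝓔 _ h₁.1) (h𝓔 _ h₂.1) hle hx hy⟩
    · rw [add_comm]
      exact ⟨E₁, h₁, aux_add_mem h (h𝓔 _ h₂.1) (h𝓔 _ h₁.1) hle hy hx⟩
  · rw [Set.eq_empty_iff_forall_notMem]
    rintro e ⟨⟨f, ⟨E₁, h₁, hf⟩, g, ⟨E₂, h₂, hg⟩, hfg⟩, he⟩
    have hfe : f = e + g := by
      rw [← hfg]
      simp
    have hef : maj r e f := by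
      rw [hfe]
      exact aux_maj_add h (aux_refl h (aux_pos (h𝓔 _ hE) he)) (aux_pos (h𝓔 _ h₂.1) hg)
    have hfE : f ∈ E :=
      aux_mem h (h𝓔 _ hE) he (aux_pos (h𝓔 _ h₁.1) hf) ⟨h₁.2.1 f hf e he, hef⟩
    exact h₁.2.2 (Set.Subset.antisymm (aux_sub h (h𝓔 _ h₁.1) (h𝓔 _ hE) hf hfE)
      (aux_sub h (h𝓔 _ hE) (h𝓔 _ h₁.1) hfE hf))
end

section
/- Let Y be a real vector space and ≺ a compatible partial preference on Y with positive cone P_≺. For every open component E ∈ O(P_≺), the set F(E) := ⋃{Ẽ ∈ O(P_≺) | Ẽ ⊴* E} is a face of the convex cone P_≺, its relative algebraic interior icr F(E) is nonempty, and icr F(E) = E. -/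
open Pointwise

variable {Y : Type*} [AddCommGroup Y] [Module ℝ Y]

section Helpers

theorem h6_iff {r : Y → Y → Prop} (h : IsCompatiblePartialPreference r) (a b : Y) :
    r a b ↔ b - a ∈ posCone r := by
  constructor
  · intro hab
    have := h.add_compat (-a) hab
    simpa [posCone, sub_eq_add_neg] using this
  · intro hab
    have := h.add_compat a (show r 0 (b - a) from hab)
    simpa using this

theorem h6_smul {r : Y → Y → Prop} (h : IsCompatiblePartialPreference r) {y : Y} {l : ℝ}
    (hl : 0 < l) (hy : y ∈ posCone r) : l • y ∈ posCone r := by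
  have := h.smul_compat hl (show r 0 y from hy)
  simpa [posCone] using this

theorem h6_add {r : Y → Y → Prop} (h : IsCompatiblePartialPreference r) {y z : Y}
    (hy : y ∈ posCone r) (hz : z ∈ posCone r) : y + z ∈ posCone r := by
  have h1 := h.add_compat z (show r 0 y from hy)
  rw [zero_add] at h1
  exact h.trans (show r 0 z from hz) h1

theorem h6_maj {r : Y → Y → Prop} (h : IsCompatiblePartialPreference r) (y z : Y) :
    maj r y z ↔ ∃ μ : ℝ, 0 < μ ∧ z - μ • y ∈ posCone r := by
  simp only [maj, h6_iff h]

theorem h6_refl {r : Y → Y → Prop} (h : IsCompatiblePartialPreference r) {y : Y}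
    (hy : y ∈ posCone r) : maj r y y := by
  rw [h6_maj h]
  refine ⟨1/2, by norm_num, ?_⟩
  have := h6_smul h (show (0:ℝ) < 1/2 by norm_num) hy
  convert this using 1
  module

theorem h6_trans {r : Y → Y → Prop} (h : IsCompatiblePartialPreference r) {a b c : Y}
    (hab : maj r a b) (hbc : maj r b c) : maj r a c := by
  obtain ⟨μ, hμ, h1⟩ := hab
  obtain ⟨ν, hν, h2⟩ := hbc
  refine ⟨ν * μ, by positivity, ?_⟩
  rw [mul_smul]
  exact h.trans (h.smul_compat hν h1) h2

theorem h6_F {r : Y → Y → Prop} (h : IsCompatiblePartialPreference r) {e : Y}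
    (he : e ∈ posCone r) :
    (⋃₀ {E' : Set Y | IsOpenComponent r E' ∧ compLE r E' (componentOf r e)}) =
      {y | y ∈ posCone r ∧ maj r y e} := by
  ext y
  constructor
  · rintro ⟨E', ⟨⟨y', hy', rfl⟩, hle⟩, hy⟩
    exact ⟨hy.1, hle y hy e ⟨he, h6_refl h he, h6_refl h he⟩⟩
  · rintro ⟨hy, hye⟩
    refine ⟨componentOf r y, ⟨⟨y, hy, rfl⟩, ?_⟩, hy, h6_refl h hy, h6_refl h hy⟩
    intro a ha b hb
    exact h6_trans h ha.2.1 (h6_trans h hye hb.2.2)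

theorem h6_majadd {r : Y → Y → Prop} (h : IsCompatiblePartialPreference r) {y z e : Y}
    (hy : maj r y e) (hz : maj r z e) : maj r (y + z) e := by
  rw [h6_maj h] at *
  obtain ⟨μ, hμ, h1⟩ := hy
  obtain ⟨ν, hν, h2⟩ := hz
  refine ⟨μ * ν / (μ + ν), by positivity, ?_⟩
  have := h6_add h (h6_smul h (show 0 < ν / (μ + ν) by positivity) h1)
    (h6_smul h (show 0 < μ / (μ + ν) by positivity) h2)
  convert this using 1
  match_scalars <;> field_simp
  ring

theorem h6_majsmul {r : Y → Y → Prop} {y e : Y} {l : ℝ} (hl : 0 < l)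
    (hy : maj r y e) : maj r (l • y) e := by
  obtain ⟨μ, hμ, h1⟩ := hy
  refine ⟨μ / l, by positivity, ?_⟩
  rwa [smul_smul, div_mul_cancel₀ _ hl.ne']

theorem h6_convex {r : Y → Y → Prop} (h : IsCompatiblePartialPreference r) (e : Y) :
    Convex ℝ {y | y ∈ posCone r ∧ maj r y e} := by
  rintro y ⟨hy, hye⟩ z ⟨hz, hze⟩ a b ha hb hab
  rcases ha.eq_or_lt with rfl | ha
  · obtain rfl : b = 1 := by linarith
    simpa using ⟨hz, hze⟩
  rcases hb.eq_or_lt with rfl | hb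
  · obtain rfl : a = 1 := by linarith
    simpa using ⟨hy, hye⟩
  exact ⟨h6_add h (h6_smul h ha hy) (h6_smul h hb hz),
    h6_majadd h (h6_majsmul ha hye) (h6_majsmul hb hze)⟩

/-- A summand of a majorized element is majorized. -/
theorem h6_left {r : Y → Y → Prop} (h : IsCompatiblePartialPreference r) {u v e : Y}
    (hv : v ∈ posCone r) (huv : maj r (u + v) e) : maj r u e := by
  rw [h6_maj h] at *
  obtain ⟨μ, hμ, h1⟩ := huv
  refine ⟨μ, hμ, ?_⟩
  have := h6_add h h1 (h6_smul h hμ hv)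
  convert this using 1
  module

theorem h6_unsmul {r : Y → Y → Prop} {y e : Y} {l : ℝ} (hl : 0 < l)
    (hy : maj r (l • y) e) : maj r y e := by
  obtain ⟨μ, hμ, h1⟩ := hy
  refine ⟨μ * l, by positivity, ?_⟩
  rwa [mul_smul]

theorem h6_icr {r : Y → Y → Prop} (h : IsCompatiblePartialPreference r) {e : Y}
    (he : e ∈ posCone r) :
    icr {y | y ∈ posCone r ∧ maj r y e} = componentOf r e := by
  ext z
  constructor
  · rintro ⟨⟨hz, hze⟩, hz2⟩
    refine ⟨hz, hze, ?_⟩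
    obtain ⟨δ, hδ, hh⟩ := hz2 e ⟨he, h6_refl h he⟩
    have h1 := (hh (-(δ/2)) (by linarith) (by linarith)).1
    rw [h6_maj h]
    refine ⟨(δ/2) / (1 + δ/2), by positivity, ?_⟩
    have := h6_smul h (show 0 < 1 / (1 + δ/2) by positivity) h1
    convert this using 1
    match_scalars <;> field_simp
  · rintro ⟨hz, hze, hez⟩
    refine ⟨⟨hz, hze⟩, ?_⟩
    rintro y ⟨hy, hye⟩
    obtain ⟨μ, hμ, h1⟩ := (h6_maj h _ _).1 (h6_trans h hye hez)
    refine ⟨min 1 μ, by positivity, ?_⟩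
    intro t ht1 ht2
    have hmin1 := min_le_left 1 μ
    have hmin2 := min_le_right 1 μ
    rcases le_or_gt 0 t with ht | ht
    · have := h6_convex h e ⟨hz, hze⟩ ⟨hy, hye⟩ (show 0 ≤ 1 - t by linarith) ht (by ring)
      convert this using 1
      module
    · obtain ⟨s, rfl⟩ : ∃ s, t = -s := ⟨-t, by ring⟩
      have hs : 0 < s := by linarith
      have hsμ : s < μ := by linarith
      have hc : 0 < 1 - s / μ := by
        rw [sub_pos, div_lt_one hμ]; exact hsμ
      constructor
      · have := h6_add h (h6_smul h hs hz)
          (h6_add h (h6_smul h (show 0 < s / μ by positivity) h1) (h6_smul h hc hz))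
        convert this using 1
        match_scalars <;> field_simp <;> ring
      · apply h6_left h (h6_smul h hs hy)
        have := h6_majsmul (show 0 < 1 + s by linarith) hze
        convert this using 1
        module

end Helpers

/-- For every open component `E`, the set `F(E) = ⋃ {Ẽ ∈ O(P_≺) | Ẽ ⊴* E}`
is a face of `P_≺`, its intrinsic core is nonempty, and `icr F(E) = E`. -/
theorem stmt_6 (r : Y → Y → Prop) (h : IsCompatiblePartialPreference r)
    (E : Set Y) (hE : IsOpenComponent r E) :
    IsFaceOf (posCone r) (⋃₀ {E' : Set Y | IsOpenComponent r E' ∧ compLE r E' E}) ∧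
    (icr (⋃₀ {E' : Set Y | IsOpenComponent r E' ∧ compLE r E' E})).Nonempty ∧
    icr (⋃₀ {E' : Set Y | IsOpenComponent r E' ∧ compLE r E' E}) = E := by
  obtain ⟨e, he, rfl⟩ := hE
  rw [h6_F h he, h6_icr h he]
  have hee : e ∈ posCone r ∧ maj r e e := ⟨he, h6_refl h he⟩
  refine ⟨⟨⟨e, hee⟩, h6_convex h e, fun y hy => hy.1, ?_⟩, ⟨e, he, hee.2, hee.2⟩, rfl⟩
  rintro u hu v hv α h0 h1 ⟨-, hm⟩
  have h1' : 0 < 1 - α := by linarith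
  refine ⟨⟨hu, h6_unsmul h0 (h6_left h (h6_smul h h1' hv) hm)⟩, hv, ?_⟩
  rw [add_comm] at hm
  exact h6_unsmul h1' (h6_left h (h6_smul h h0 hu) hm)
end

section
/- Let Y be a real vector space and ≺ a compatible partial preference on Y with positive cone P_≺ and associated vector space L_≺. Let U_≺ be the family of all step-linear functions u : Y → ℝ such that for all y, z ∈ Y: y ≺ z implies u(z − y) > 0, and z − y ∈ L_≺ implies u(z − y) = 0. Then U_≺ is nonempty, and moreover for all y, z ∈ Y: y ≺ z ⟺ u(z − y) > 0 for all u ∈ U_≺, and z − y ∈ L_≺ ⟺ u(z − y) = 0 for all u ∈ U_≺. -/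
open Pointwise

variable {Y : Type*} [AddCommGroup Y] [Module ℝ Y]

/-- The family `U_≺` of step-linear functions monotone w.r.t. `≺` and vanishing on `L_≺`. -/
def stepFamily (r : Y → Y → Prop) : Set (Y → ℝ) :=
  {u | IsStepLinear u ∧ (∀ y z : Y, r y z → 0 < u (z - y)) ∧
    (∀ y z : Y, z - y ∈ assocSubspace (posCone r) → u (z - y) = 0)}

/-- An order-preserving additive map from an ordered real module to `ℝ` is homogeneous. -/
lemma monotone_add_map_smul {M : Type*} [AddCommGroup M] [LinearOrder M] [IsOrderedAddMonoid M]
    [Module ℝ M] [IsOrderedModule ℝ M] (f : M →+o ℝ) (t : ℝ) (x : M) :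
    f (t • x) = t • f x := by
  have key : ∀ x : M, 0 ≤ x → ∀ t : ℝ, f (t • x) = t • f x := by
    intro x hx t
    let g : ℝ →+ ℝ :=
      { toFun := fun s => f (s • x)
        map_zero' := by simp
        map_add' := by intro a b; simp [add_smul] }
    have hmono : Monotone g := by
      intro a b hab
      exact OrderHomClass.monotone f (smul_le_smul_of_nonneg_right hab hx)
    have hcont : Continuous g := MeasureTheory.Measure.AddMonoidHom.continuous_of_measurable g hmono.measurable
    have := map_real_smul g hcont t 1
    simpa [g] using this
  rcases le_total 0 x with hx | hx
  · exact key x hx t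
  · have := key (-x) (neg_nonneg.mpr hx) t
    simpa using this

lemma nonempty_seed_real (M : Type*) [AddCommGroup M] [LinearOrder M] [IsOrderedAddMonoid M]
    [Module ℝ M] [IsOrderedModule ℝ M] : Nonempty (HahnEmbedding.Seed ℝ M ℝ) := by
  obtain ⟨strata⟩ : Nonempty (HahnEmbedding.ArchimedeanStrata ℝ M) := inferInstance
  choose f hf using fun c ↦ Archimedean.exists_orderAddMonoidHom_real_injective (strata.stratum c)
  have hmod : ∀ c, IsOrderedModule ℝ (strata.stratum c) := fun c =>
    IsOrderedModule.of_smul_nonneg fun t ht x hx =>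
      show (0 : M) ≤ t • (x : M) from smul_nonneg ht hx
  refine ⟨strata, fun c ↦
    { toFun := f c
      map_add' := map_add (f c)
      map_smul' := fun t x => monotone_add_map_smul (f c) t x }, fun c ↦ ?_⟩
  apply Monotone.strictMono_of_injective
  · exact OrderHomClass.monotone (f c)
  · exact hf c

/-- Convex cones omitting the origin. -/
structure IsPC {V : Type*} [AddCommGroup V] [Module ℝ V] (Q : Set V) : Prop where
  add : ∀ x ∈ Q, ∀ y ∈ Q, x + y ∈ Q
  smul : ∀ x ∈ Q, ∀ t : ℝ, 0 < t → t • x ∈ Q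
  zero : (0 : V) ∉ Q

lemma IsPC.adjoin {V : Type*} [AddCommGroup V] [Module ℝ V] {Q : Set V} (hQ : IsPC Q)
    {x : V} (hx : x ≠ 0) (hnx : -x ∉ Q) : ∃ Q', IsPC Q' ∧ Q ⊆ Q' ∧ x ∈ Q' := by
  refine ⟨Q ∪ {y | ∃ q t, (q ∈ Q ∨ q = 0) ∧ (0:ℝ) < t ∧ y = q + t • x}, ⟨?_, ?_, ?_⟩,
    Set.subset_union_left, Or.inr ⟨0, 1, Or.inr rfl, one_pos, by simp⟩⟩
  · rintro y (hy | ⟨q, t, hq, ht, rfl⟩) z (hz | ⟨p, s, hp, hs, rfl⟩)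
    · exact Or.inl (hQ.add _ hy _ hz)
    · refine Or.inr ⟨y + p, s, Or.inl ?_, hs, by abel⟩
      rcases hp with hp | rfl
      · exact hQ.add _ hy _ hp
      · simpa using hy
    · refine Or.inr ⟨q + z, t, Or.inl ?_, ht, by abel⟩
      rcases hq with hq | rfl
      · exact hQ.add _ hq _ hz
      · simpa using hz
    · refine Or.inr ⟨q + p, t + s, ?_, add_pos ht hs, by rw [add_smul]; abel⟩
      rcases hq with hq | rfl
      · rcases hp with hp | rfl
        · exact Or.inl (hQ.add _ hq _ hp)
        · exact Or.inl (by simpa using hq)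
      · simpa using hp
  · rintro y (hy | ⟨q, t, hq, ht, rfl⟩) s hs
    · exact Or.inl (hQ.smul _ hy _ hs)
    · refine Or.inr ⟨s • q, s * t, ?_, mul_pos hs ht, by rw [smul_add, smul_smul]⟩
      rcases hq with hq | rfl
      · exact Or.inl (hQ.smul _ hq _ hs)
      · simp
  · rintro (h0 | ⟨q, t, hq, ht, h0⟩)
    · exact hQ.zero h0
    · rcases hq with hq | rfl
      · apply hnx
        have h1 : t⁻¹ • q ∈ Q := hQ.smul _ hq _ (inv_pos.mpr ht)
        have h2 : q = -(t • x) := eq_neg_of_add_eq_zero_left h0.symm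
        rwa [h2, smul_neg, smul_smul, inv_mul_cancel₀ ht.ne', one_smul] at h1
      · rw [zero_add] at h0
        exact (smul_ne_zero ht.ne' hx) h0.symm

lemma IsPC.exists_total {V : Type*} [AddCommGroup V] [Module ℝ V] {P : Set V} (hP : IsPC P) :
    ∃ Q, IsPC Q ∧ P ⊆ Q ∧ ∀ x, x ≠ 0 → x ∈ Q ∨ -x ∈ Q := by
  obtain ⟨Q, hPQ, hmax⟩ := zorn_subset_nonempty {Q : Set V | IsPC Q} (by
    intro c hc hchain hne
    refine ⟨⋃₀ c, ⟨?_, ?_, ?_⟩, fun s hs => Set.subset_sUnion_of_mem hs⟩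
    · rintro x ⟨s, hs, hx⟩ y ⟨t, ht, hy⟩
      rcases hchain.total hs ht with h | h
      · exact ⟨t, ht, (hc ht).add _ (h hx) _ hy⟩
      · exact ⟨s, hs, (hc hs).add _ hx _ (h hy)⟩
    · rintro x ⟨s, hs, hx⟩ t ht
      exact ⟨s, hs, (hc hs).smul _ hx _ ht⟩
    · rintro ⟨s, hs, h0⟩
      exact (hc hs).zero h0) P hP
  refine ⟨Q, hmax.prop, hPQ, fun x hx => ?_⟩
  by_contra! hcon
  obtain ⟨Q', hQ', hsub, hxQ'⟩ := hmax.prop.adjoin hx hcon.2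
  exact hcon.1 (hmax.le_of_ge hQ' hsub hxQ')

/-- In a linearly ordered real vector space there is a cortege realising the order. -/
lemma exists_stepLinear_ordered (M : Type*) [AddCommGroup M] [LinearOrder M]
    [IsOrderedAddMonoid M] [Module ℝ M] [IsOrderedModule ℝ M]
    {W : Type*} [AddCommGroup W] [Module ℝ W] (π : W →ₗ[ℝ] M) (hπ : Function.Surjective π) :
    ∃ u : W → ℝ, IsStepLinear u ∧ ∀ x, (0 < π x → 0 < u x) ∧ (π x < 0 → u x < 0) ∧
      (π x = 0 → u x = 0) := by
  haveI := nonempty_seed_real M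
  obtain ⟨f, hf, -⟩ := hahnEmbedding_isOrderedModule (K := ℝ) (M := M) (R := ℝ)
  let φ : FiniteArchimedeanClass M → (W →ₗ[ℝ] ℝ) := fun c =>
    { toFun := fun x => (ofLex (f (π x))).coeff c
      map_add' := by intro x y; simp
      map_smul' := by intro t x; simp }
  have hφ : ∀ c x, φ c x = (ofLex (f (π x))).coeff c := fun _ _ => rfl
  -- `c` is the leading index of `x`
  let Ld : FiniteArchimedeanClass M → W → Prop := fun c x => (ofLex (f (π x))).orderTop = c
  have Ld_ne : ∀ {c x}, Ld c x → φ c x ≠ 0 := fun h => HahnSeries.coeff_orderTop_ne h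
  have Ld_le : ∀ {c d x}, Ld c x → φ d x ≠ 0 → c ≤ d := by
    intro c d x h hd
    have := HahnSeries.orderTop_le_of_coeff_ne_zero hd
    rw [show (ofLex (f (π x))).orderTop = c from h] at this
    exact WithTop.coe_le_coe.mp this
  have Ld_ex : ∀ x, π x ≠ 0 → ∃ c, Ld c x := by
    intro x hx
    have h1 : ofLex (f (π x)) ≠ 0 := by
      intro h0
      apply hx
      apply hf.injective
      rw [map_zero]
      exact h0
    obtain ⟨c, hc⟩ := WithTop.ne_top_iff_exists.mp (HahnSeries.orderTop_ne_top.2 h1)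
    exact ⟨c, hc.symm⟩
  have Ld_coeff : ∀ {c x}, Ld c x → φ c x = (ofLex (f (π x))).leadingCoeff := by
    intro c x h
    have h' : (ofLex (f (π x))).orderTop = c := h
    simp [HahnSeries.leadingCoeff, h', hφ]
  have Ld_zero : ∀ x, π x = 0 → ∀ c, φ c x = 0 := by
    intro x hx c
    simp [hφ, hx]
  let S : Set (FiniteArchimedeanClass M) := {c | ∃ x, Ld c x}
  have hle : ∀ {c d}, c ∈ S → φ c = φ d → c ≤ d := by
    rintro c d ⟨x, hx⟩ h
    exact Ld_le hx (h ▸ Ld_ne hx)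
  have hinj : ∀ {c d}, c ∈ S → d ∈ S → φ c = φ d → c = d :=
    fun hc hd h => le_antisymm (hle hc h) (hle hd h.symm)
  let F : Set (W →ₗ[ℝ] ℝ) := φ '' S
  let le : (W →ₗ[ℝ] ℝ) → (W →ₗ[ℝ] ℝ) → Prop :=
    fun a b => ∃ c ∈ S, ∃ d ∈ S, a = φ c ∧ b = φ d ∧ c ≤ d
  have hleast : ∀ {c x}, Ld c x → IsLeastWrt le (Fy F x) (φ c) := by
    intro c x h
    refine ⟨⟨⟨c, ⟨x, h⟩, rfl⟩, Ld_ne h⟩, ?_⟩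
    rintro ψ ⟨⟨d, hd, rfl⟩, hne⟩
    exact ⟨c, ⟨x, h⟩, d, hd, rfl, rfl, Ld_le h hne⟩
  have hempty : ∀ x, π x = 0 → Fy F x = ∅ := by
    intro x hx
    rw [Set.eq_empty_iff_forall_notMem]
    rintro ψ ⟨⟨d, hd, rfl⟩, hne⟩
    exact hne (Ld_zero x hx d)
  refine ⟨fun x => (ofLex (f (π x))).leadingCoeff, ⟨F, le, ?_, ?_⟩, ?_⟩
  · refine ⟨?_, ?_, ?_, ?_, ?_, ?_⟩
    · rintro _ ⟨c, hc, rfl⟩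
      exact ⟨c, hc, c, hc, rfl, rfl, le_rfl⟩
    · rintro _ - _ - ⟨c, hc, d, hd, rfl, rfl, h1⟩ ⟨d', hd', c', hc', e1, e2, h2⟩
      rw [← hinj hd hd' e1, ← hinj hc hc' e2] at h2
      rw [le_antisymm h1 h2]
    · rintro _ - _ - _ - ⟨c, hc, d, hd, rfl, rfl, h1⟩ ⟨d', hd', e, he, e1, rfl, h2⟩
      rw [← hinj hd hd' e1] at h2
      exact ⟨c, hc, e, he, rfl, rfl, h1.trans h2⟩
    · rintro _ ⟨c, hc, rfl⟩ _ ⟨d, hd, rfl⟩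
      rcases le_total c d with h | h
      · exact Or.inl ⟨c, hc, d, hd, rfl, rfl, h⟩
      · exact Or.inr ⟨d, hd, c, hc, rfl, rfl, h⟩
    · intro y
      by_cases hy : π y = 0
      · exact Or.inl (hempty y hy)
      · obtain ⟨c, hc⟩ := Ld_ex y hy
        exact Or.inr ⟨φ c, hleast hc⟩
    · rintro _ ⟨c, ⟨x, hx⟩, rfl⟩
      exact ⟨x, hleast hx⟩
  · intro y
    by_cases hy : π y = 0
    · exact Or.inl ⟨hempty y hy, by simp [hy]⟩
    · obtain ⟨c, hc⟩ := Ld_ex y hy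
      exact Or.inr ⟨φ c, hleast hc, (Ld_coeff hc).symm⟩
  · intro x
    refine ⟨fun h => ?_, fun h => ?_, fun h => by simp [h]⟩
    · rw [HahnSeries.leadingCoeff_pos_iff, ← map_zero f]
      exact hf h
    · rw [HahnSeries.leadingCoeff_neg_iff, ← map_zero f]
      exact hf h

/-- A total convex cone on the quotient yields a step-linear function. -/
lemma exists_stepLinear_total {M : Type*} [AddCommGroup M] [Module ℝ M] {Q : Set M}
    (hQ : IsPC Q) (htot : ∀ x, x ≠ 0 → x ∈ Q ∨ -x ∈ Q)
    {W : Type*} [AddCommGroup W] [Module ℝ W] (π : W →ₗ[ℝ] M) (hπ : Function.Surjective π) :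
    ∃ u : W → ℝ, IsStepLinear u ∧ ∀ x, (π x ∈ Q → 0 < u x) ∧ (-(π x) ∈ Q → u x < 0) ∧
      (π x = 0 → u x = 0) := by
  classical
  have hdis : ∀ x, x ∈ Q → -x ∈ Q → False := by
    intro x hx hnx
    apply hQ.zero
    simpa using hQ.add _ hx _ hnx
  letI : LinearOrder M :=
    { le := fun a b => b - a ∈ Q ∨ b = a
      lt := fun a b => b - a ∈ Q
      le_refl := fun a => Or.inr rfl
      le_trans := by
        rintro a b c (h1 | rfl) (h2 | rfl)
        · left; simpa using hQ.add _ h2 _ h1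
        · left; exact h1
        · left; exact h2
        · right; rfl
      lt_iff_le_not_ge := by
        intro a b
        constructor
        · intro h
          refine ⟨Or.inl h, ?_⟩
          rintro (h' | h')
          · exact hdis _ h (by simpa using h')
          · subst h'; exact hQ.zero (by simpa using h)
        · rintro ⟨h | h, h'⟩
          · exact h
          · exact absurd (Or.inr h.symm) h'
      le_antisymm := by
        rintro a b (h | rfl) (h' | h')
        · exact (hdis _ h (by simpa using h')).elim
        · exact h'
        · rfl
        · rfl
      le_total := by
        intro a b
        by_cases hab : b - a = 0
        · exact Or.inl (Or.inr (sub_eq_zero.mp hab))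
        · rcases htot _ hab with h | h
          · exact Or.inl (Or.inl h)
          · exact Or.inr (Or.inl (by simpa using h))
      toDecidableLE := Classical.decRel _ }
  have hlt : ∀ a b : M, a < b ↔ b - a ∈ Q := fun a b => Iff.rfl
  have hle : ∀ a b : M, a ≤ b ↔ (b - a ∈ Q ∨ b = a) := fun a b => Iff.rfl
  haveI : IsOrderedAddMonoid M := 
    { add_le_add_left := by
        intro a b h c
        rw [hle] at h ⊢
        simpa using h }
  haveI : IsOrderedModule ℝ M := by
    refine IsOrderedModule.of_smul_nonneg ?_
    intro t ht x hx
    rw [hle] at hx ⊢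
    rw [sub_zero] at hx ⊢
    rcases ht.eq_or_lt with rfl | ht
    · right; simp
    · rcases hx with hx | rfl
      · exact Or.inl (hQ.smul _ hx _ ht)
      · right; simp
  obtain ⟨u, hu, hx⟩ := exists_stepLinear_ordered M π hπ
  refine ⟨u, hu, fun x => ⟨fun h => (hx x).1 ?_, fun h => (hx x).2.1 ?_, (hx x).2.2⟩⟩
  · rw [hlt]; simpa using h
  · rw [hlt]; simpa using h

/-- `U_≺` is nonempty, and `y ≺ z ⟺ u(z−y) > 0` for all `u ∈ U_≺`, and
`z − y ∈ L_≺ ⟺ u(z−y) = 0` for all `u ∈ U_≺`. -/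
theorem stmt_19 (r : Y → Y → Prop) (h : IsCompatiblePartialPreference r) :
    (stepFamily r).Nonempty ∧
    (∀ y z : Y, r y z ↔ ∀ u ∈ stepFamily r, 0 < u (z - y)) ∧
    (∀ y z : Y, z - y ∈ assocSubspace (posCone r) ↔
      ∀ u ∈ stepFamily r, u (z - y) = 0) := by
  have hr : ∀ y z, r y z ↔ z - y ∈ posCone r := by
    intro y z
    constructor
    · intro hyz
      have := h.add_compat (-y) hyz
      simpa [posCone, sub_eq_add_neg] using this
    · intro hyz
      have := h.add_compat y (show r 0 (z - y) from hyz)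
      simpa using this
  have hP : IsPC (posCone r) := by
    refine ⟨?_, ?_, ?_⟩
    · intro x hx y hy
      have h1 := h.add_compat y (show r 0 x from hx)
      rw [zero_add] at h1
      exact h.trans (show r 0 y from hy) h1
    · intro x hx t ht
      have h1 := h.smul_compat ht (show r 0 x from hx)
      rwa [smul_zero] at h1
    · intro h0
      exact h.asymm (show r 0 0 from h0) h0
  generalize hPdef : posCone r = P at *
  let L : Submodule ℝ Y :=
    { carrier := assocSubspace P
      zero_mem' := by intro y hy t; simpa using hy
      add_mem' := by
        intro a b ha hb y hy t
        rw [smul_add, ← add_assoc]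
        exact hb _ (ha _ hy t) t
      smul_mem' := by
        intro c a ha y hy t
        rw [smul_smul]
        exact ha _ hy _ }
  have hL : ∀ x, x ∈ assocSubspace P ↔ x ∈ L := fun x => Iff.rfl
  have hPL : ∀ p ∈ P, ∀ l ∈ L, p + l ∈ P := by
    intro p hp l hl
    simpa using hl p hp 1
  let P' : Set (Y ⧸ L) := L.mkQ '' P
  have hP'mem : ∀ x, L.mkQ x ∈ P' ↔ x ∈ P := by
    intro x
    constructor
    · rintro ⟨p, hp, hpx⟩
      have h1 : x - p ∈ L := by
        rw [← Submodule.Quotient.eq]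
        exact hpx.symm
      simpa using hPL p hp _ h1
    · exact fun hx => ⟨x, hx, rfl⟩
  have hP' : IsPC P' := by
    refine ⟨?_, ?_, ?_⟩
    · rintro _ ⟨x, hx, rfl⟩ _ ⟨y, hy, rfl⟩
      exact ⟨x + y, hP.add _ hx _ hy, map_add _ _ _⟩
    · rintro _ ⟨x, hx, rfl⟩ t ht
      exact ⟨t • x, hP.smul _ hx _ ht, map_smul _ _ _⟩
    · intro h0
      rw [← map_zero L.mkQ, hP'mem] at h0
      exact hP.zero h0
  have hL0 : ∀ x, L.mkQ x = 0 ↔ x ∈ L := fun x => by simp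
  have build : ∀ Q : Set (Y ⧸ L), IsPC Q → P' ⊆ Q →
      ∃ u ∈ stepFamily r, ∀ x, -(L.mkQ x) ∈ Q → u x < 0 := by
    intro Q hQ hsub
    obtain ⟨T, hT, hQT, htot⟩ := hQ.exists_total
    obtain ⟨u, hu, hux⟩ := exists_stepLinear_total hT htot L.mkQ L.mkQ_surjective
    refine ⟨u, ⟨hu, ?_, ?_⟩, fun x hx => (hux x).2.1 (hQT hx)⟩
    · intro y z hyz
      exact (hux _).1 (hQT (hsub ((hP'mem _).2 ((hr y z).1 hyz))))
    · intro y z hyz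
      rw [hPdef] at hyz
      exact (hux _).2.2 ((hL0 _).2 hyz)
  have sep : ∀ x, x ∉ P → x ∉ L → ∃ u ∈ stepFamily r, u x < 0 := by
    intro x hxP hxL
    have h1 : -(L.mkQ x) ≠ 0 := by
      rw [Ne, neg_eq_zero, hL0]; exact hxL
    have h2 : -(-(L.mkQ x)) ∉ P' := by
      rw [neg_neg, hP'mem]; exact hxP
    obtain ⟨Q, hQ, hsub, hx⟩ := hP'.adjoin h1 h2
    obtain ⟨u, hu, hux⟩ := build Q hQ hsub
    exact ⟨u, hu, hux x hx⟩
  obtain ⟨u₀, hu₀, -⟩ := build P' hP' subset_rfl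
  refine ⟨⟨u₀, hu₀⟩, fun y z => ⟨fun hyz u hu => hu.2.1 y z hyz, fun hall => ?_⟩,
    fun y z => ⟨fun hyz u hu => hu.2.2 y z (by rw [hPdef]; exact hyz), fun hall => ?_⟩⟩
  · by_contra hn
    rw [hr] at hn
    by_cases hzL : z - y ∈ L
    · have h1 := hall u₀ hu₀
      rw [hu₀.2.2 y z (by rw [hPdef]; exact hzL)] at h1
      exact lt_irrefl _ h1
    · obtain ⟨u, hu, hneg⟩ := sep _ hn hzL
      exact lt_asymm hneg (hall u hu)
  · by_contra hn
    by_cases hzP : z - y ∈ P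
    · have h1 := hu₀.2.1 y z ((hr y z).2 hzP)
      exact h1.ne' (hall u₀ hu₀)
    · obtain ⟨u, hu, hneg⟩ := sep _ hzP hn
      exact hneg.ne (hall u hu)
end
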